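/- For any probability measure D on Z, any loss ℓ : H × Z → [0,1], any prior density P on H, any measurable parametric function μ : H × Z^m → ℝ with finite positive Gibbs normalizer, and any δ ∈ (0,1], with probability at least 1−δ over S ∼ D^m, h′ ∼ P, and h ∼ Q_S (Gibbs posterior for μ), one has kl(R_S^ℓ(h) ‖ R_D^ℓ(h)) ≤ (1/m)·[ μ(h′,S) − μ(h,S) + ln(P(h′)/P(h)) + ln(8√m/δ²) ]. -/

import Mathlib

open MeasureTheory ProbabilityTheory

/-- The true risk `R_D^ℓ(h) = E_{z∼D} ℓ(h,z)`. -/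
noncomputable def trueRisk {H Z : Type*} [MeasurableSpace Z]
    (D : Measure Z) (ℓ : H → Z → ℝ) (h : H) : ℝ :=
  ∫ z, ℓ h z ∂D

/-- The empirical risk `R_S^ℓ(h) = (1/m) Σ_{i=1}^m ℓ(h,z_i)`. -/
noncomputable def empRisk {H Z : Type*} {m : ℕ}
    (ℓ : H → Z → ℝ) (h : H) (S : Fin m → Z) : ℝ :=
  (∑ i, ℓ h (S i)) / m

/-- The binary KL divergence `kl(q‖p) = q ln(q/p) + (1−q) ln((1−q)/(1−p))`. -/
noncomputable def binKL (q p : ℝ) : ℝ :=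
  q * Real.log (q / p) + (1 - q) * Real.log ((1 - q) / (1 - p))

/-!
The Gibbs posterior `Q_S` is the prior tilted by `V = -μ(·, S) - ln P`. Hence the weight
`exp (V h' - V h)`, averaged over `h' ∼ P` and `h ∼ Q_S`, turns the posterior back into the prior,
and Markov's inequality reduces the claim to the moment bound `E exp (m kl(R_S‖R_D)) ≤ (3π/2) √m`
for a fixed hypothesis.

The moment bound uses the method of mixtures. For every `θ ∈ (0, 1)`, the quantity
`exp (m (kl(R_S‖R_D) - kl(R_S‖θ)))` is a product of Bernoulli likelihood ratios and has mean at most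
`1`. Integrate this over `θ = sin² (β / 2)` with `β ∈ (0, π)`, the Jeffreys prior up to
normalisation: by the `χ²` bound on `kl`, `∫ exp (-m kl(q‖θ)) dβ ≥ 2 / (3 √m)` for every
`q ∈ [0, 1]`.
-/

section BinKL

open Real Set

variable {p q θ α s : ℝ}

lemma exp_mul_log_add_mul_log_le {w a b : ℝ} (hw : w ∈ Icc (0 : ℝ) 1)
    (ha : w ≠ 0 → 0 < a) (hb : 1 - w ≠ 0 → 0 < b) :
    exp (w * log a + (1 - w) * log b) ≤ w * a + (1 - w) * b := by
  have mul_exp_log {v c : ℝ} (hc : v ≠ 0 → 0 < c) : v * exp (log c) = v * c := by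
    rcases eq_or_ne v 0 with rfl | hv
    · simp
    · rw [exp_log (hc hv)]
  calc exp (w * log a + (1 - w) * log b)
      ≤ w * exp (log a) + (1 - w) * exp (log b) :=
        convexOn_exp.2 (mem_univ _) (mem_univ _) hw.1 (sub_nonneg.2 hw.2) (add_sub_cancel _ _)
    _ = w * a + (1 - w) * b := by rw [mul_exp_log ha, mul_exp_log hb]

lemma binKL_self (p : ℝ) : binKL p p = 0 := by
  have mul_log_div_self (x : ℝ) : x * log (x / x) = 0 := by
    rcases eq_or_ne x 0 with rfl | hx <;> simp [*]
  rw [binKL, mul_log_div_self, mul_log_div_self, add_zero]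

lemma binKL_one_sub_one_sub (q p : ℝ) : binKL (1 - q) (1 - p) = binKL q p := by
  rw [binKL, binKL, sub_sub_cancel, sub_sub_cancel, add_comm]

lemma measurable_binKL : Measurable (Function.uncurry binKL) := by
  simp only [Function.uncurry_def, binKL]
  fun_prop

lemma binKL_sub_binKL (q : ℝ) (hp : p ∈ Ioo (0 : ℝ) 1) (hθ : θ ∈ Ioo (0 : ℝ) 1) :
    binKL q p - binKL q θ = q * log (θ / p) + (1 - q) * log ((1 - θ) / (1 - p)) := by
  have mul_log_div (x : ℝ) {y : ℝ} (hy : y ≠ 0) : x * log (x / y) = x * log x - x * log y := by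
    rcases eq_or_ne x 0 with rfl | hx
    · simp
    · rw [log_div hx hy, mul_sub]
  have hp0 := hp.1.ne'
  have hθ0 := hθ.1.ne'
  have hp1 := (sub_pos.2 hp.2).ne'
  have hθ1 := (sub_pos.2 hθ.2).ne'
  rw [binKL, binKL, mul_log_div _ hp0, mul_log_div _ hθ0, mul_log_div _ hp1, mul_log_div _ hθ1,
    log_div hθ0 hp0, log_div hθ1 hp1]
  ring

/-- The likelihood ratio `(θ / p) ^ x * ((1 - θ) / (1 - p)) ^ (1 - x)` of the Bernoulli laws with
parameters `θ` and `p`, extended from outcomes `x ∈ {0, 1}` to `x ∈ [0, 1]`. -/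
noncomputable def bernoulliRatio (θ p x : ℝ) : ℝ :=
  exp (x * log (θ / p) + (1 - x) * log ((1 - θ) / (1 - p)))

lemma bernoulliRatio_pos (θ p x : ℝ) : 0 < bernoulliRatio θ p x := exp_pos _

lemma measurable_bernoulliRatio (θ p : ℝ) : Measurable (bernoulliRatio θ p) := by
  unfold bernoulliRatio
  fun_prop

lemma bernoulliRatio_le {x : ℝ} (hp : p ∈ Ioo (0 : ℝ) 1) (hθ : θ ∈ Ioo (0 : ℝ) 1)
    (hx : x ∈ Icc (0 : ℝ) 1) :
    bernoulliRatio θ p x ≤ x * (θ / p) + (1 - x) * ((1 - θ) / (1 - p)) :=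
  exp_mul_log_add_mul_log_le hx (fun _ ↦ div_pos hθ.1 hp.1)
    (fun _ ↦ div_pos (sub_pos.2 hθ.2) (sub_pos.2 hp.2))

lemma exp_binKL_le_one_add_sq_div (hq : q ∈ Icc (0 : ℝ) 1) (hp : p ∈ Ioo (0 : ℝ) 1) :
    exp (binKL q p) ≤ 1 + (q - p) ^ 2 / (p * (1 - p)) := by
  have hp0 := hp.1
  have hp1 := sub_pos.2 hp.2
  calc exp (binKL q p)
      ≤ q * (q / p) + (1 - q) * ((1 - q) / (1 - p)) :=
        exp_mul_log_add_mul_log_le hq (fun h ↦ div_pos (hq.1.lt_of_ne' h) hp0)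
          (fun h ↦ div_pos ((sub_nonneg.2 hq.2).lt_of_ne' h) hp1)
    _ = 1 + (q - p) ^ 2 / (p * (1 - p)) := by
        field_simp
        ring

/-- The Bernoulli parameter `sin² (β / 2)` of angle `β ∈ [0, π]`. In this parametrisation the Fisher
information is constant, so that `exp (-m * binKL q p)` has width of order `1 / √m` in the angle of
`p`, uniformly in `q`. -/
noncomputable def angleParam (β : ℝ) : ℝ := (1 - cos β) / 2

lemma measurable_angleParam : Measurable angleParam := by
  unfold angleParam
  fun_prop

lemma angleParam_mem_Icc (β : ℝ) : angleParam β ∈ Icc (0 : ℝ) 1 := by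
  constructor <;> rw [angleParam] <;> linarith [cos_le_one β, neg_one_le_cos β]

lemma angleParam_mul_one_sub (β : ℝ) :
    angleParam β * (1 - angleParam β) = (sin β / 2) ^ 2 := by
  rw [angleParam, div_pow, sin_sq]
  ring

lemma angleParam_mem_Ioo {β : ℝ} (hβ : β ∈ Ioo 0 π) : angleParam β ∈ Ioo (0 : ℝ) 1 := by
  have hpos : 0 < angleParam β * (1 - angleParam β) := by
    rw [angleParam_mul_one_sub]
    exact pow_pos (half_pos (sin_pos_of_mem_Ioo hβ)) 2
  have h0 := (angleParam_mem_Icc β).1.lt_of_ne' (left_ne_zero_of_mul hpos.ne')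
  exact ⟨h0, sub_pos.1 (pos_of_mul_pos_right hpos h0.le)⟩

lemma angleParam_pi_sub (β : ℝ) : angleParam (π - β) = 1 - angleParam β := by
  rw [angleParam, angleParam, cos_pi_sub]
  ring

lemma exists_angleParam_eq (hq : q ∈ Icc (0 : ℝ) 1) : ∃ α ∈ Icc 0 π, angleParam α = q := by
  refine ⟨arccos (1 - 2 * q), ⟨arccos_nonneg _, arccos_le_pi _⟩, ?_⟩
  rw [angleParam, cos_arccos (by linarith [hq.2]) (by linarith [hq.1])]
  ring

lemma cos_sub_cos_add_le_sin_mul_tan (hα : 0 ≤ cos α) (hs : 0 < cos s) :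
    cos α - cos (α + s) ≤ sin (α + s) * tan s := by
  have hcos : cos α = cos (α + s) * cos s + sin (α + s) * sin s := by
    rw [← cos_sub, add_sub_cancel_right]
  rw [tan_eq_sin_div_cos, ← mul_div_assoc, le_div_iff₀ hs]
  nlinarith [mul_nonneg hα (sub_nonneg.2 (cos_le_one s))]

lemma exp_binKL_angleParam_le (hα : α ∈ Icc 0 (π / 2)) (hs : s ∈ Ioo 0 (π / 2)) :
    exp (binKL (angleParam α) (angleParam (α + s))) ≤ (cos s ^ 2)⁻¹ := by
  have hβ : α + s ∈ Ioo 0 π := ⟨by linarith [hα.1, hs.1], by linarith [hα.2, hs.2]⟩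
  have hsin : 0 < sin (α + s) := sin_pos_of_mem_Ioo hβ
  have hcos : 0 < cos s := cos_pos_of_mem_Ioo ⟨by linarith [hs.1, pi_pos], hs.2⟩
  have hcosα : 0 ≤ cos α := cos_nonneg_of_mem_Icc ⟨by linarith [hα.1, pi_pos], hα.2⟩
  have hdiff : 0 ≤ cos α - cos (α + s) :=
    sub_nonneg.2 (cos_le_cos_of_nonneg_of_le_pi hα.1 hβ.2.le (by linarith [hs.1]))
  calc exp (binKL (angleParam α) (angleParam (α + s)))
      ≤ 1 + (angleParam α - angleParam (α + s)) ^ 2 / (sin (α + s) / 2) ^ 2 := by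
        rw [← angleParam_mul_one_sub]
        exact exp_binKL_le_one_add_sq_div (angleParam_mem_Icc α) (angleParam_mem_Ioo hβ)
    _ = 1 + ((cos α - cos (α + s)) / sin (α + s)) ^ 2 := by
        rw [angleParam, angleParam]
        field_simp
        ring
    _ ≤ 1 + tan s ^ 2 := by
        gcongr
        rw [div_le_iff₀' hsin]
        exact cos_sub_cos_add_le_sin_mul_tan hcosα hcos
    _ = (cos s ^ 2)⁻¹ := by rw [← inv_one_add_tan_sq hcos.ne', inv_inv]

lemma one_sub_mul_sq_le_exp_neg_binKL_angleParam (m : ℕ) (hα : α ∈ Icc 0 (π / 2))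
    (hs : s ∈ Ioc (0 : ℝ) 1) :
    1 - m * s ^ 2 ≤ exp (-(m * binKL (angleParam α) (angleParam (α + s)))) := by
  have hsπ : s ∈ Ioo 0 (π / 2) := ⟨hs.1, by linarith [hs.2, pi_gt_three]⟩
  have hs2 : s ^ 2 ≤ 1 := pow_le_one₀ hs.1.le hs.2
  calc 1 - m * s ^ 2 = 1 + m * -s ^ 2 := by ring
    _ ≤ (1 + -s ^ 2) ^ m := one_add_mul_le_pow (by linarith) m
    _ ≤ (cos s ^ 2) ^ m := by
        have := sin_sq_le_sq (x := s)
        gcongr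
        · linarith
        · linarith [sin_sq_add_cos_sq s]
    _ ≤ exp (-binKL (angleParam α) (angleParam (α + s))) ^ m := by
        gcongr
        rw [exp_neg]
        exact le_inv_of_le_inv₀ (exp_pos _) (exp_binKL_angleParam_le hα hsπ)
    _ = exp (-(m * binKL (angleParam α) (angleParam (α + s)))) := by
        rw [← exp_nat_mul, mul_neg]

lemma setLIntegral_Ioo_one_sub_mul_sq (α : ℝ) {m : ℝ} (hm : 0 < m) :
    ∫⁻ β in Ioo α (α + (√m)⁻¹), ENNReal.ofReal (1 - m * (β - α) ^ 2) =
      ENNReal.ofReal (2 / (3 * √m)) := by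
  have hsqrt : √m ^ 2 = m := sq_sqrt hm.le
  have hr : 0 < (√m)⁻¹ := inv_pos.2 (sqrt_pos.2 hm)
  have hnonneg : ∀ β ∈ Ioo α (α + (√m)⁻¹), 0 ≤ 1 - m * (β - α) ^ 2 := by
    intro β hβ
    have : (β - α) ^ 2 ≤ (√m)⁻¹ ^ 2 :=
      pow_le_pow_left₀ (by linarith [hβ.1]) (by linarith [hβ.2]) 2
    rw [inv_pow, hsqrt, ← one_div, le_div_iff₀' hm] at this
    linarith
  have hcont : Continuous fun β : ℝ ↦ 1 - m * (β - α) ^ 2 := by fun_prop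
  rw [← ofReal_integral_eq_lintegral_ofReal
      ((hcont.integrableOn_Icc).mono_set Ioo_subset_Icc_self)
      (ae_restrict_of_forall_mem measurableSet_Ioo hnonneg),
    ← integral_Ioc_eq_integral_Ioo, ← intervalIntegral.integral_of_le (by linarith),
    intervalIntegral.integral_comp_sub_right (fun x ↦ 1 - m * x ^ 2)]
  rw [sub_self, add_sub_cancel_left, intervalIntegral.integral_sub (by simp)
    (Continuous.intervalIntegrable (by fun_prop) _ _), intervalIntegral.integral_const_mul,
    integral_pow, integral_one]
  congr 1
  have hcube : m * (√m)⁻¹ ^ 3 = (√m)⁻¹ := by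
    rw [inv_pow, pow_succ, hsqrt, mul_inv, mul_inv_cancel_left₀ hm.ne']
  linear_combination -hcube / 3

lemma le_setLIntegral_exp_neg_binKL_angleParam {m : ℕ} (hm : 0 < m) (hα : α ∈ Icc 0 (π / 2)) :
    ENNReal.ofReal (2 / (3 * √m)) ≤ ∫⁻ β in Ioo 0 π,
      ENNReal.ofReal (exp (-(m * binKL (angleParam α) (angleParam β)))) := by
  have hr1 : (√m)⁻¹ ≤ 1 := inv_le_one_of_one_le₀ (one_le_sqrt.2 (by exact_mod_cast hm))
  rw [← setLIntegral_Ioo_one_sub_mul_sq α (by exact_mod_cast hm)]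
  calc ∫⁻ β in Ioo α (α + (√m)⁻¹), ENNReal.ofReal (1 - m * (β - α) ^ 2)
      ≤ ∫⁻ β in Ioo α (α + (√m)⁻¹),
          ENNReal.ofReal (exp (-(m * binKL (angleParam α) (angleParam β)))) := by
        refine setLIntegral_mono' measurableSet_Ioo fun β hβ ↦ ENNReal.ofReal_le_ofReal ?_
        simpa using one_sub_mul_sq_le_exp_neg_binKL_angleParam m hα (s := β - α)
          ⟨by linarith [hβ.1], by linarith [hβ.2]⟩
    _ ≤ _ := lintegral_mono_set
        (Ioo_subset_Ioo hα.1 (by linarith [hα.2, pi_gt_three]))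

lemma le_setLIntegral_exp_neg_binKL {m : ℕ} (hm : 0 < m) (hq : q ∈ Icc (0 : ℝ) 1) :
    ENNReal.ofReal (2 / (3 * √m)) ≤
      ∫⁻ β in Ioo 0 π, ENNReal.ofReal (exp (-(m * binKL q (angleParam β)))) := by
  obtain ⟨α, hα, rfl⟩ := exists_angleParam_eq hq
  rcases le_total α (π / 2) with hα2 | hα2
  · exact le_setLIntegral_exp_neg_binKL_angleParam hm ⟨hα.1, hα2⟩
  · have hpre : (fun β ↦ π - β) ⁻¹' Ioo 0 π = Ioo 0 π := by simp
    calc ENNReal.ofReal (2 / (3 * √m))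
        ≤ ∫⁻ β in Ioo 0 π,
            ENNReal.ofReal (exp (-(m * binKL (angleParam (π - α)) (angleParam β)))) :=
          le_setLIntegral_exp_neg_binKL_angleParam hm
            ⟨by linarith [hα.2], by linarith⟩
      _ = ∫⁻ β in Ioo 0 π,
            ENNReal.ofReal (exp (-(m * binKL (angleParam (π - α)) (angleParam (π - β))))) := by
          conv_rhs => rw [← hpre]
          exact ((volume.measurePreserving_sub_left π).setLIntegral_comp_preimage_emb
            (MeasurableEquiv.subLeft π).measurableEmbedding _ _).symm
      _ = ∫⁻ β in Ioo 0 π, ENNReal.ofReal (exp (-(m * binKL (angleParam α) (angleParam β)))) := by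
          simp only [angleParam_pi_sub, binKL_one_sub_one_sub]

end BinKL

section Risk

open Real Set

variable {H Z : Type*} {m : ℕ} {ℓ : H → Z → ℝ} {h : H}

lemma empRisk_mem_Icc (hℓ01 : ∀ z, ℓ h z ∈ Icc (0 : ℝ) 1) (S : Fin m → Z) :
    empRisk ℓ h S ∈ Icc (0 : ℝ) 1 := by
  refine ⟨div_nonneg (Finset.sum_nonneg fun i _ ↦ (hℓ01 _).1) m.cast_nonneg,
    div_le_one_of_le₀ ?_ m.cast_nonneg⟩
  simpa using Finset.sum_le_card_nsmul Finset.univ (fun i ↦ ℓ h (S i)) 1 fun i _ ↦ (hℓ01 _).2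

lemma natCast_mul_empRisk (S : Fin m → Z) : m * empRisk ℓ h S = ∑ i, ℓ h (S i) := by
  rcases eq_or_ne m 0 with rfl | hm
  · simp
  · exact mul_div_cancel₀ _ (Nat.cast_ne_zero.2 hm)

lemma exp_mul_binKL_sub_binKL_empRisk {p θ : ℝ} (hp : p ∈ Ioo (0 : ℝ) 1)
    (hθ : θ ∈ Ioo (0 : ℝ) 1) (S : Fin m → Z) :
    exp (m * (binKL (empRisk ℓ h S) p - binKL (empRisk ℓ h S) θ)) =
      ∏ i, bernoulliRatio θ p (ℓ h (S i)) := by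
  simp only [bernoulliRatio]
  rw [binKL_sub_binKL _ hp hθ, ← exp_sum, Finset.sum_add_distrib, ← Finset.sum_mul,
    ← Finset.sum_mul, Finset.sum_sub_distrib, ← natCast_mul_empRisk, Finset.sum_const,
    Finset.card_univ, Fintype.card_fin, nsmul_one]
  ring_nf

variable [MeasurableSpace Z] {D : Measure Z}

lemma trueRisk_mem_Icc [IsProbabilityMeasure D] (hℓ01 : ∀ z, ℓ h z ∈ Icc (0 : ℝ) 1) :
    trueRisk D ℓ h ∈ Icc (0 : ℝ) 1 := by
  refine ⟨integral_nonneg fun z ↦ (hℓ01 z).1, ?_⟩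
  simpa [trueRisk] using integral_mono_of_nonneg (μ := D) (.of_forall fun z ↦ (hℓ01 z).1)
    (integrable_const (1 : ℝ)) (.of_forall fun z ↦ (hℓ01 z).2)

lemma measurable_trueRisk [MeasurableSpace H] [SFinite D] (hℓ : Measurable (Function.uncurry ℓ)) :
    Measurable (trueRisk D ℓ) :=
  hℓ.stronglyMeasurable.integral_prod_right.measurable

lemma measurable_empRisk [MeasurableSpace H] (hℓ : Measurable (Function.uncurry ℓ)) :
    Measurable fun x : (Fin m → Z) × H ↦ empRisk ℓ x.2 x.1 :=
  (Finset.measurable_sum _ fun i _ ↦ hℓ.comp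
    (measurable_snd.prodMk ((measurable_pi_apply i).comp measurable_fst))).div_const _

variable [IsProbabilityMeasure D]

lemma integrable_loss (hℓ : Measurable (ℓ h)) (hℓ01 : ∀ z, ℓ h z ∈ Icc (0 : ℝ) 1) :
    Integrable (ℓ h) D :=
  .of_mem_Icc 0 1 hℓ.aemeasurable (.of_forall hℓ01)

lemma integral_one_sub_eq_one_sub_trueRisk (hℓ : Measurable (ℓ h))
    (hℓ01 : ∀ z, ℓ h z ∈ Icc (0 : ℝ) 1) :
    ∫ z, (1 - ℓ h z) ∂D = 1 - trueRisk D ℓ h := by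
  rw [integral_sub (integrable_const 1) (integrable_loss hℓ hℓ01), ← trueRisk,
    integral_const, probReal_univ, one_smul]

lemma integrable_bernoulliRatio {θ p : ℝ} (hℓ : Measurable (ℓ h))
    (hℓ01 : ∀ z, ℓ h z ∈ Icc (0 : ℝ) 1) (hp : p ∈ Ioo (0 : ℝ) 1) (hθ : θ ∈ Ioo (0 : ℝ) 1) :
    Integrable (fun z ↦ bernoulliRatio θ p (ℓ h z)) D := by
  have hint : Integrable (ℓ h) D := integrable_loss hℓ hℓ01
  refine ((hint.mul_const (θ / p)).add
    (((integrable_const 1).sub hint).mul_const ((1 - θ) / (1 - p)))).mono'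
    ((measurable_bernoulliRatio θ p).comp hℓ).aestronglyMeasurable (.of_forall fun z ↦ ?_)
  rw [norm_of_nonneg (bernoulliRatio_pos _ _ _).le]
  exact bernoulliRatio_le hp hθ (hℓ01 z)

lemma integral_bernoulliRatio_trueRisk_le_one {θ : ℝ} (hℓ : Measurable (ℓ h))
    (hℓ01 : ∀ z, ℓ h z ∈ Icc (0 : ℝ) 1) (hp : trueRisk D ℓ h ∈ Ioo (0 : ℝ) 1)
    (hθ : θ ∈ Ioo (0 : ℝ) 1) :
    ∫ z, bernoulliRatio θ (trueRisk D ℓ h) (ℓ h z) ∂D ≤ 1 := by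
  set p := trueRisk D ℓ h
  have hint : Integrable (ℓ h) D := integrable_loss hℓ hℓ01
  have hint_left : Integrable (fun z ↦ ℓ h z * (θ / p)) D := hint.mul_const _
  have hint_right : Integrable (fun z ↦ (1 - ℓ h z) * ((1 - θ) / (1 - p))) D :=
    ((integrable_const 1).sub hint).mul_const _
  calc ∫ z, bernoulliRatio θ p (ℓ h z) ∂D
      ≤ ∫ z, ℓ h z * (θ / p) + (1 - ℓ h z) * ((1 - θ) / (1 - p)) ∂D :=
        integral_mono_of_nonneg (.of_forall fun z ↦ (bernoulliRatio_pos _ _ _).le)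
          (hint_left.add hint_right) (.of_forall fun z ↦ bernoulliRatio_le hp hθ (hℓ01 z))
    _ = p * (θ / p) + (1 - p) * ((1 - θ) / (1 - p)) := by
        rw [integral_add hint_left hint_right, integral_mul_const, integral_mul_const,
          integral_one_sub_eq_one_sub_trueRisk hℓ hℓ01, ← trueRisk]
    _ = 1 := by
        rw [mul_div_cancel₀ _ hp.1.ne', mul_div_cancel₀ _ (sub_pos.2 hp.2).ne', add_sub_cancel]

lemma lintegral_exp_mul_binKL_sub_binKL_le_one {θ : ℝ} (hℓ : Measurable (ℓ h))
    (hℓ01 : ∀ z, ℓ h z ∈ Icc (0 : ℝ) 1) (hp : trueRisk D ℓ h ∈ Ioo (0 : ℝ) 1)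
    (hθ : θ ∈ Ioo (0 : ℝ) 1) :
    ∫⁻ S, ENNReal.ofReal (exp (m * (binKL (empRisk ℓ h S) (trueRisk D ℓ h) -
      binKL (empRisk ℓ h S) θ))) ∂(Measure.pi fun _ : Fin m ↦ D) ≤ 1 := by
  simp_rw [exp_mul_binKL_sub_binKL_empRisk hp hθ]
  rw [← ofReal_integral_eq_lintegral_ofReal
      (.fintype_prod fun _ ↦ integrable_bernoulliRatio hℓ hℓ01 hp hθ)
      (.of_forall fun S ↦ Finset.prod_nonneg fun i _ ↦ (bernoulliRatio_pos _ _ _).le),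
    integral_fintype_prod_eq_pow fun z ↦ bernoulliRatio θ (trueRisk D ℓ h) (ℓ h z),
    ENNReal.ofReal_le_one]
  exact pow_le_one₀ (integral_nonneg fun z ↦ (bernoulliRatio_pos _ _ _).le)
    (integral_bernoulliRatio_trueRisk_le_one hℓ hℓ01 hp hθ)

lemma lintegral_exp_mul_binKL_le_of_trueRisk_mem_Ioo (hm : 0 < m) (hℓ : Measurable (ℓ h))
    (hℓ01 : ∀ z, ℓ h z ∈ Icc (0 : ℝ) 1) (hp : trueRisk D ℓ h ∈ Ioo (0 : ℝ) 1) :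
    ∫⁻ S, ENNReal.ofReal (exp (m * binKL (empRisk ℓ h S) (trueRisk D ℓ h)))
      ∂(Measure.pi fun _ : Fin m ↦ D) ≤ ENNReal.ofReal (3 * π / 2 * √m) := by
  set p := trueRisk D ℓ h
  set c : ℝ := 2 / (3 * √m) with hc_def
  have hc : 0 < c := by positivity
  have hratio_meas : Measurable fun x : (Fin m → Z) × ℝ ↦ ENNReal.ofReal
      (exp (m * (binKL (empRisk ℓ h x.1) p - binKL (empRisk ℓ h x.1) (angleParam x.2)))) := by
    have := measurable_angleParam
    unfold binKL empRisk
    fun_prop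
  have hpointwise (S : Fin m → Z) :
      ENNReal.ofReal (exp (m * binKL (empRisk ℓ h S) p)) * ENNReal.ofReal c ≤
        ∫⁻ β in Ioo 0 π, ENNReal.ofReal
          (exp (m * (binKL (empRisk ℓ h S) p - binKL (empRisk ℓ h S) (angleParam β)))) := by
    simp_rw [mul_sub, sub_eq_add_neg, exp_add, ENNReal.ofReal_mul (exp_pos _).le]
    rw [lintegral_const_mul' _ _ ENNReal.ofReal_ne_top]
    gcongr
    exact le_setLIntegral_exp_neg_binKL hm (empRisk_mem_Icc hℓ01 S)
  have hmixture : (∫⁻ S, ENNReal.ofReal (exp (m * binKL (empRisk ℓ h S) p))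
      ∂(Measure.pi fun _ : Fin m ↦ D)) * ENNReal.ofReal c ≤ ENNReal.ofReal π := by
    rw [← lintegral_mul_const' _ _ ENNReal.ofReal_ne_top]
    refine (lintegral_mono hpointwise).trans ?_
    rw [lintegral_lintegral_swap hratio_meas.aemeasurable]
    calc _ ≤ ∫⁻ _ in Ioo 0 π, 1 := setLIntegral_mono' measurableSet_Ioo fun β hβ ↦
          lintegral_exp_mul_binKL_sub_binKL_le_one hℓ hℓ01 hp (angleParam_mem_Ioo hβ)
      _ = ENNReal.ofReal π := by simp
  calc _ ≤ ENNReal.ofReal π / ENNReal.ofReal c :=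
        (ENNReal.le_div_iff_mul_le (.inl (by simpa using hc)) (.inl ENNReal.ofReal_ne_top)).2
          hmixture
    _ = ENNReal.ofReal (3 * π / 2 * √m) := by
        rw [← ENNReal.ofReal_div_of_pos hc, hc_def]
        congr 1
        field_simp

lemma lintegral_exp_mul_binKL_of_ae_eq_const {v : ℝ} (hm : 0 < m) (hv : ∀ᵐ z ∂D, ℓ h z = v) :
    ∫⁻ S, ENNReal.ofReal (exp (m * binKL (empRisk ℓ h S) (trueRisk D ℓ h)))
      ∂(Measure.pi fun _ : Fin m ↦ D) = 1 := by
  have htrue : trueRisk D ℓ h = v := by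
    rw [trueRisk, integral_congr_ae hv, integral_const, probReal_univ, one_smul]
  have hemp : ∀ᵐ S ∂(Measure.pi fun _ : Fin m ↦ D), empRisk ℓ h S = v := by
    filter_upwards [Filter.eventually_all.2 fun i ↦
      (Measure.tendsto_eval_ae_ae (μ := fun _ : Fin m ↦ D) (i := i)).eventually hv] with S hS
    have hS' : ∀ i, ℓ h (S i) = v := hS
    have : (m : ℝ) ≠ 0 := by positivity
    simp [empRisk, hS', this]
  calc _ = ∫⁻ _, 1 ∂(Measure.pi fun _ : Fin m ↦ D) := lintegral_congr_ae <| by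
        filter_upwards [hemp] with S hS
        rw [hS, htrue, binKL_self, mul_zero, exp_zero, ENNReal.ofReal_one]
    _ = 1 := by simp

lemma ae_eq_zero_of_trueRisk_eq_zero (hℓ : Measurable (ℓ h)) (hℓ01 : ∀ z, ℓ h z ∈ Icc (0 : ℝ) 1)
    (hp : trueRisk D ℓ h = 0) : ∀ᵐ z ∂D, ℓ h z = 0 :=
  (integral_eq_zero_iff_of_nonneg (fun z ↦ (hℓ01 z).1)
    (integrable_loss hℓ hℓ01)).1 hp

lemma ae_eq_one_of_trueRisk_eq_one (hℓ : Measurable (ℓ h)) (hℓ01 : ∀ z, ℓ h z ∈ Icc (0 : ℝ) 1)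
    (hp : trueRisk D ℓ h = 1) : ∀ᵐ z ∂D, ℓ h z = 1 := by
  have hcompl : trueRisk D (fun h z ↦ 1 - ℓ h z) h = 0 := by
    rw [trueRisk, integral_one_sub_eq_one_sub_trueRisk hℓ hℓ01, hp, sub_self]
  filter_upwards [ae_eq_zero_of_trueRisk_eq_zero (ℓ := fun h z ↦ 1 - ℓ h z) (hℓ.const_sub 1)
    (fun z ↦ Icc.mem_iff_one_sub_mem.1 (hℓ01 z)) hcompl] with z hz
  exact (sub_eq_zero.1 hz).symm

theorem lintegral_exp_mul_binKL_le (hm : 0 < m) (hℓ : Measurable (ℓ h))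
    (hℓ01 : ∀ z, ℓ h z ∈ Icc (0 : ℝ) 1) :
    ∫⁻ S, ENNReal.ofReal (exp (m * binKL (empRisk ℓ h S) (trueRisk D ℓ h)))
      ∂(Measure.pi fun _ : Fin m ↦ D) ≤ ENNReal.ofReal (3 * π / 2 * √m) := by
  have hone_le : (1 : ENNReal) ≤ ENNReal.ofReal (3 * π / 2 * √m) := by
    have hsqrt : 1 ≤ √m := one_le_sqrt.2 (by exact_mod_cast hm)
    rw [ENNReal.one_le_ofReal]
    nlinarith [pi_gt_three]
  have hp := trueRisk_mem_Icc (D := D) hℓ01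
  rcases hp.1.eq_or_lt with hp0 | hp0
  · have hae := ae_eq_zero_of_trueRisk_eq_zero hℓ hℓ01 hp0.symm
    exact (lintegral_exp_mul_binKL_of_ae_eq_const hm hae).trans_le hone_le
  rcases hp.2.eq_or_lt with hp1 | hp1
  · have hae := ae_eq_one_of_trueRisk_eq_one hℓ hℓ01 hp1
    exact (lintegral_exp_mul_binKL_of_ae_eq_const hm hae).trans_le hone_le
  · exact lintegral_exp_mul_binKL_le_of_trueRisk_mem_Ioo hm hℓ hℓ01 ⟨hp0, hp1⟩

end Risk

section Tilted

open Real Set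

variable {Ω H : Type*} [MeasurableSpace Ω] [MeasurableSpace H]

lemma one_sub_le_measure_le_log_div {ρ : Measure Ω} [IsProbabilityMeasure ρ] {X : Ω → ℝ}
    (hX : Measurable X) {C δ : ℝ} (hC : 0 < C) (hδ : 0 < δ)
    (hexp : ∫⁻ ω, ENNReal.ofReal (exp (X ω)) ∂ρ ≤ ENNReal.ofReal C) :
    1 - ENNReal.ofReal δ ≤ ρ {ω | X ω ≤ log (C / δ)} := by
  have hCδ : 0 < C / δ := div_pos hC hδ
  have hcompl : {ω | X ω ≤ log (C / δ)}ᶜ ⊆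
      {ω | ENNReal.ofReal (C / δ) ≤ ENNReal.ofReal (exp (X ω))} := fun ω hω ↦
    ENNReal.ofReal_le_ofReal ((log_le_iff_le_exp hCδ).1 (le_of_not_ge hω))
  have hmarkov : ρ {ω | X ω ≤ log (C / δ)}ᶜ ≤ ENNReal.ofReal δ :=
    calc ρ {ω | X ω ≤ log (C / δ)}ᶜ
        ≤ (∫⁻ ω, ENNReal.ofReal (exp (X ω)) ∂ρ) / ENNReal.ofReal (C / δ) :=
          (measure_mono hcompl).trans (meas_ge_le_lintegral_div (by fun_prop)
            (by simpa using hCδ) ENNReal.ofReal_ne_top)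
      _ ≤ ENNReal.ofReal C / ENNReal.ofReal (C / δ) := by gcongr
      _ = ENNReal.ofReal δ := by
          rw [← ENNReal.ofReal_div_of_pos hCδ, div_div_cancel₀ hC.ne']
  rw [prob_compl_eq_one_sub (measurableSet_le hX measurable_const)] at hmarkov
  exact tsub_le_iff_tsub_le.1 hmarkov

lemma tilted_eq_tilted_withDensity {lam : Measure H} {P f : H → ℝ} (hP : Measurable P)
    (hPpos : ∀ h, 0 < P h) (hf : Measurable f) :
    lam.tilted f =
      (lam.withDensity fun h ↦ ENNReal.ofReal (P h)).tilted fun h ↦ f h - log (P h) := by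
  have hexp (h : H) : P h * exp (f h - log (P h)) = exp (f h) := by
    rw [exp_sub, exp_log (hPpos h), mul_div_cancel₀ _ (hPpos h).ne']
  have hnorm : ∫ h, exp (f h - log (P h)) ∂(lam.withDensity fun h ↦ ENNReal.ofReal (P h)) =
      ∫ h, exp (f h) ∂lam := by
    rw [integral_withDensity_eq_integral_toReal_smul hP.ennreal_ofReal
      (.of_forall fun _ ↦ ENNReal.ofReal_lt_top)]
    simp_rw [ENNReal.toReal_ofReal (hPpos _).le, smul_eq_mul, hexp]
  rw [Measure.tilted, Measure.tilted, hnorm,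
    ← withDensity_mul _ hP.ennreal_ofReal (by fun_prop)]
  congr 1 with h
  rw [Pi.mul_apply, ← ENNReal.ofReal_mul (hPpos h).le, mul_div_assoc', hexp]

lemma lintegral_mul_exp_neg_tilted {P : Measure H} [NeZero P] {V : H → ℝ}
    (hV : Integrable (fun h ↦ exp (V h)) P) (g : H → ENNReal) :
    (∫⁻ h, g h * ENNReal.ofReal (exp (-V h)) ∂P.tilted V) *
      ∫⁻ h', ENNReal.ofReal (exp (V h')) ∂P = ∫⁻ h, g h ∂P := by
  have hZ : 0 < ∫ h, exp (V h) ∂P := integral_exp_pos hV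
  rw [lintegral_tilted,
    ← ofReal_integral_eq_lintegral_ofReal hV (.of_forall fun _ ↦ (exp_pos _).le),
    ← lintegral_mul_const' _ _ ENNReal.ofReal_ne_top]
  refine lintegral_congr fun h ↦ ?_
  have hcancel : exp (V h) / (∫ h, exp (V h) ∂P) * exp (-V h) * ∫ h, exp (V h) ∂P = 1 := by
    rw [exp_neg]
    field_simp
  calc _ = g h * (ENNReal.ofReal (exp (V h) / ∫ h, exp (V h) ∂P) * ENNReal.ofReal (exp (-V h)) *
          ENNReal.ofReal (∫ h, exp (V h) ∂P)) := by ring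
    _ = g h := by
        rw [← ENNReal.ofReal_mul (by positivity), ← ENNReal.ofReal_mul (by positivity), hcancel,
          ENNReal.ofReal_one, mul_one]

variable {ν : Measure Ω} {P : Measure H} [IsProbabilityMeasure P]
  {V φ : Ω → H → ℝ} {κ : Kernel Ω H} [IsMarkovKernel κ]

lemma lintegral_exp_add_sub_prod_compProd_tilted [SFinite ν]
    (hφ : Measurable (Function.uncurry φ)) (hV : Measurable (Function.uncurry V))
    (hκ : ∀ ω, κ ω = P.tilted (V ω)) :
    ∫⁻ p, ENNReal.ofReal (exp (φ p.2.1 p.2.2 + (V p.2.1 p.1 - V p.2.1 p.2.2)))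
        ∂(P.prod (ν ⊗ₘ κ)) =
      ∫⁻ h, ∫⁻ ω, ENNReal.ofReal (exp (φ ω h)) ∂ν ∂P := by
  have hVint (ω : Ω) : Integrable (fun h ↦ exp (V ω h)) P := by
    by_contra hnot
    exact IsProbabilityMeasure.ne_zero (κ ω) ((hκ ω).trans (tilted_of_not_integrable hnot))
  have hφ_meas : Measurable fun x : Ω × H ↦ ENNReal.ofReal (exp (φ x.1 x.2)) := by fun_prop
  have : Measurable fun ω ↦ ∫⁻ h, ENNReal.ofReal (exp (V ω h)) ∂P :=
    Measurable.lintegral_prod_right' (f := fun x : Ω × H ↦ ENNReal.ofReal (exp (V x.1 x.2)))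
      (by fun_prop)
  have hfactor (h' : H) (x : Ω × H) :
      ENNReal.ofReal (exp (φ x.1 x.2 + (V x.1 h' - V x.1 x.2))) =
        ENNReal.ofReal (exp (φ x.1 x.2)) * ENNReal.ofReal (exp (-V x.1 x.2)) *
          ENNReal.ofReal (exp (V x.1 h')) := by
    rw [← ENNReal.ofReal_mul (exp_pos _).le, ← ENNReal.ofReal_mul (by positivity), ← exp_add,
      ← exp_add]
    ring_nf
  rw [lintegral_prod_symm' _ (by fun_prop)]
  simp_rw [hfactor]
  calc ∫⁻ x, ∫⁻ h', ENNReal.ofReal (exp (φ x.1 x.2)) * ENNReal.ofReal (exp (-V x.1 x.2)) *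
          ENNReal.ofReal (exp (V x.1 h')) ∂P ∂(ν ⊗ₘ κ)
      = ∫⁻ x, ENNReal.ofReal (exp (φ x.1 x.2)) * ENNReal.ofReal (exp (-V x.1 x.2)) *
          ∫⁻ h', ENNReal.ofReal (exp (V x.1 h')) ∂P ∂(ν ⊗ₘ κ) :=
        lintegral_congr fun x ↦ lintegral_const_mul _ (by fun_prop)
    _ = ∫⁻ ω, ∫⁻ h, ENNReal.ofReal (exp (φ ω h)) * ENNReal.ofReal (exp (-V ω h)) *
          ∫⁻ h', ENNReal.ofReal (exp (V ω h')) ∂P ∂κ ω ∂ν :=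
        Measure.lintegral_compProd (by fun_prop)
    _ = ∫⁻ ω, ∫⁻ h, ENNReal.ofReal (exp (φ ω h)) ∂P ∂ν := by
        refine lintegral_congr fun ω ↦ ?_
        rw [lintegral_mul_const _ (by fun_prop), hκ, lintegral_mul_exp_neg_tilted (hVint ω)]
    _ = ∫⁻ h, ∫⁻ ω, ENNReal.ofReal (exp (φ ω h)) ∂ν ∂P :=
        lintegral_lintegral_swap hφ_meas.aemeasurable

theorem one_sub_le_measure_le_sub_add_log_of_tilted [IsProbabilityMeasure ν]
    (hφ : Measurable (Function.uncurry φ)) (hV : Measurable (Function.uncurry V))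
    (hκ : ∀ ω, κ ω = P.tilted (V ω)) {C δ : ℝ} (hC : 0 < C) (hδ : 0 < δ)
    (hexp : ∀ h, ∫⁻ ω, ENNReal.ofReal (exp (φ ω h)) ∂ν ≤ ENNReal.ofReal C) :
    1 - ENNReal.ofReal δ ≤ (P.prod (ν ⊗ₘ κ))
      {p | φ p.2.1 p.2.2 ≤ V p.2.1 p.2.2 - V p.2.1 p.1 + log (C / δ)} := by
  have hmean : ∫⁻ p, ENNReal.ofReal (exp (φ p.2.1 p.2.2 + (V p.2.1 p.1 - V p.2.1 p.2.2)))
      ∂(P.prod (ν ⊗ₘ κ)) ≤ ENNReal.ofReal C := by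
    rw [lintegral_exp_add_sub_prod_compProd_tilted hφ hV hκ]
    exact (lintegral_mono hexp).trans_eq (by simp)
  refine (one_sub_le_measure_le_log_div (by fun_prop) hC hδ hmean).trans
    (measure_mono fun p hp ↦ ?_)
  rw [mem_ofPred_eq] at hp ⊢
  linarith

end Tilted

lemma log_three_mul_pi_div_two_mul_sqrt_div_le {m δ : ℝ} (hm : 0 < m) (hδ : δ ∈ Set.Ioc (0 : ℝ) 1) :
    Real.log (3 * Real.pi / 2 * √m / δ) ≤ Real.log (8 * √m / δ ^ 2) := by
  have hδ0 : 0 < δ := hδ.1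
  gcongr
  · linarith [Real.pi_lt_four]
  · exact pow_le_of_le_one hδ0.le hδ.2 two_ne_zero

theorem gibbs_complexity_kl_bound_general
    {Z H : Type*} [MeasurableSpace Z] [MeasurableSpace H] {m : ℕ} (hm : 0 < m)
    (D : Measure Z) [IsProbabilityMeasure D]
    {ℓ : H → Z → ℝ} (hℓ : Measurable (Function.uncurry ℓ))
    (hℓ01 : ∀ h z, ℓ h z ∈ Set.Icc (0 : ℝ) 1)
    (P : Measure H) [IsProbabilityMeasure P]
    {V : (Fin m → Z) → H → ℝ} (hV : Measurable (Function.uncurry V))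
    {κ : Kernel (Fin m → Z) H} [IsMarkovKernel κ] (hκ : ∀ S, κ S = P.tilted (V S))
    {δ : ℝ} (hδ : 0 < δ) :
    1 - ENNReal.ofReal δ ≤ (P.prod (Measure.pi (fun _ : Fin m ↦ D) ⊗ₘ κ))
      {p | binKL (empRisk ℓ p.2.2 p.2.1) (trueRisk D ℓ p.2.2) ≤
        (1 / m) * (V p.2.1 p.2.2 - V p.2.1 p.1 + Real.log (3 * Real.pi / 2 * √m / δ))} := by
  have hm0 : (0 : ℝ) < m := by exact_mod_cast hm
  have hkl : Measurable fun x : (Fin m → Z) × H ↦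
      m * binKL (empRisk ℓ x.2 x.1) (trueRisk D ℓ x.2) :=
    (measurable_binKL.comp
      ((measurable_empRisk hℓ).prodMk ((measurable_trueRisk hℓ).comp measurable_snd))).const_mul _
  refine (one_sub_le_measure_le_sub_add_log_of_tilted
    (φ := fun S h ↦ m * binKL (empRisk ℓ h S) (trueRisk D ℓ h)) hkl hV hκ (by positivity) hδ
    fun h ↦ lintegral_exp_mul_binKL_le hm hℓ.of_uncurry_left (hℓ01 h)).trans
    (measure_mono fun p hp ↦ ?_)
  rwa [Set.mem_ofPred_eq, one_div, le_inv_mul_iff₀ hm0]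

/-- **Disintegrated PAC-Bayes bound with complexity measure, kl form.**
With probability at least `1−δ` over `S ∼ D^m`, `h′ ∼ P` and `h ∼ Q_S`
(Gibbs posterior for `μ`),
`kl(R_S^ℓ(h) ‖ R_D^ℓ(h)) ≤ (1/m)·[μ(h′,S) − μ(h,S) + ln(P(h′)/P(h)) + ln(8√m/δ²)]`. -/
theorem gibbs_complexity_kl_bound
    {Z H : Type*} [MeasurableSpace Z] [MeasurableSpace H]
    (m : ℕ) (hm : 0 < m)
    (D : Measure Z) [IsProbabilityMeasure D]
    (lam : Measure H) [SigmaFinite lam]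
    (ℓ : H → Z → ℝ) (hℓ : Measurable (Function.uncurry ℓ))
    (hℓ01 : ∀ h z, ℓ h z ∈ Set.Icc (0:ℝ) 1)
    (P : H → ℝ) (hPpos : ∀ h, 0 < P h) (hPmeas : Measurable P)
    (Pm : Measure H) [IsProbabilityMeasure Pm]
    (hPm : Pm = lam.withDensity fun h => ENNReal.ofReal (P h))
    (μ : H → (Fin m → Z) → ℝ) (hμ : Measurable (Function.uncurry μ))
    (hμint : ∀ S, Integrable (fun g => Real.exp (-(μ g S))) lam)
    (hZpos : ∀ S : Fin m → Z, 0 < ∫ g, Real.exp (-(μ g S)) ∂lam)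
    (κ : Kernel (Fin m → Z) H) [IsMarkovKernel κ]
    (hκ : ∀ S, κ S = lam.withDensity fun h =>
      ENNReal.ofReal (Real.exp (-(μ h S)) / ∫ g, Real.exp (-(μ g S)) ∂lam))
    (δ : ℝ) (hδ : δ ∈ Set.Ioc (0:ℝ) 1) :
    1 - ENNReal.ofReal δ ≤
      (Pm.prod (Measure.pi (fun _ : Fin m => D) ⊗ₘ κ))
        {p : H × ((Fin m → Z) × H) |
          binKL (empRisk ℓ p.2.2 p.2.1) (trueRisk D ℓ p.2.2) ≤
            (1 / m) * (μ p.1 p.2.1 - μ p.2.2 p.2.1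
              + Real.log (P p.1 / P p.2.2)
              + Real.log (8 * Real.sqrt m / δ^2)) } := by
  have hκ_tilted (S : Fin m → Z) : κ S = Pm.tilted fun h ↦ -μ h S - Real.log (P h) := by
    rw [hPm, ← tilted_eq_tilted_withDensity hPmeas hPpos (by fun_prop)]
    exact hκ S
  refine (gibbs_complexity_kl_bound_general hm D hℓ hℓ01 Pm (by fun_prop) hκ_tilted hδ.1).trans
    (measure_mono fun p (hp : binKL _ _ ≤ _) ↦ hp.trans ?_)
  rw [Real.log_div (hPpos _).ne' (hPpos _).ne']
  gcongr ?_ * ?_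
  linarith [log_three_mul_pi_div_two_mul_sqrt_div_le (Nat.cast_pos.2 hm) hδ]
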